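/- Let P(λ) = ∑_{k=0}^d λ^k P_k be an n×n matrix polynomial over a field F with even degree d = 2t (t ≥ 2) and invertible leading coefficient P_d, and set Q(λ) := ∑_{k=0}^{d−1} λ^k P_k. Let λB+A be a pencil of size (t+1)n×(t+1)n partitioned as [[M_{11}(λ), M_{12}(λ)],[M_{21}(λ), M_{22}(λ)]] with M_{11} of size n×n, M_{12} of size n×tn, M_{21} of size tn×n, M_{22} of size tn×tn. If M_{11}(λ) = −P_d, M_{12}(λ)(Λ_{t−1}(λ)⊗I_n) = λ^t P_d, (Λ_{t−1}(λ)^T⊗I_n)M_{21}(λ) = λ^t P_d, and (Λ_{t−1}(λ)^T⊗I_n)M_{22}(λ)(Λ_{t−1}(λ)⊗I_n) = Q(λ), then for each σ ∈ {1,−1} the modified block Kronecker pencil built from λB+A is a strong linearization of P(λ) regarded as grade d. -/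

import Mathlib

open Polynomial Matrix
open scoped Kronecker

noncomputable section

/-- Entrywise inclusion of a constant matrix into polynomial matrices. -/
def matC {F : Type} [Field F] {m l : Type*} (M : Matrix m l F) : Matrix m l (Polynomial F) :=
  M.map fun a => (C a : Polynomial F)

/-- The pencil `λ ↦ A + λ B`, represented as a matrix over `F[λ]`. -/
def pencil {F : Type} [Field F] {m l : Type*} (A B : Matrix m l F) :
    Matrix m l (Polynomial F) :=
  matC A + (X : Polynomial F) • matC B

/-- Grade-`g` reversal `rev_g`, applied entrywise. -/
def revMat {F : Type} [Field F] {m l : Type*} (g : ℕ) (M : Matrix m l (Polynomial F)) :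
    Matrix m l (Polynomial F) :=
  M.map fun q => q.reflect g

/-- Entrywise evaluation of a polynomial matrix at a point. -/
def evalMat {F : Type} [Field F] {m l : Type*} (a : F) (M : Matrix m l (Polynomial F)) :
    Matrix m l F :=
  M.map fun q => q.eval a

/-- The matrix polynomial `P(λ) = ∑_{k=0}^d λ^k P_k` built from its coefficients. -/
def polyOfCoeffs {F : Type} [Field F] {n : ℕ} (d : ℕ) (Pc : ℕ → Matrix (Fin n) (Fin n) F) :
    Matrix (Fin n) (Fin n) (Polynomial F) :=
  ∑ k ∈ Finset.range (d + 1), (X : Polynomial F) ^ k • matC (Pc k)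

/-- The `(i,j)` block of a block-partitioned matrix. -/
def blk {α p q n m : Type*} (A : Matrix (p × n) (q × m) α) (i : p) (j : q) :
    Matrix n m α :=
  Matrix.of fun r c => A (i, r) (j, c)

/-- `Λ_s(λ) ⊗ I_n`, an `(s+1)n × n` polynomial matrix whose `i`-th block is `λ^{s-i} I_n`. -/
def Lam (F : Type) [Field F] (s n : ℕ) :
    Matrix (Fin (s+1) × Fin n) (Fin n) (Polynomial F) :=
  Matrix.of fun p c => if p.2 = c then (X : Polynomial F) ^ (s - (p.1 : ℕ)) else 0

/-- The pencil `L_s(λ) ∈ F[λ]^{s×(s+1)}` with `-1` on the diagonal and `λ` on the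
superdiagonal. -/
def Lpen (F : Type) [Field F] (s : ℕ) : Matrix (Fin s) (Fin (s+1)) (Polynomial F) :=
  Matrix.of fun i j =>
    if (j : ℕ) = (i : ℕ) then -1 else if (j : ℕ) = (i : ℕ) + 1 then X else 0

/-- The block Kronecker pencil `[[λB+A, L_s(λ)ᵀ⊗I_n],[σ L_s(λ)⊗I_n, 0]]` associated with a
pencil `M = λB+A` of size `(s+1)n × (s+1)n`. -/
def blockKron (F : Type) [Field F] (s n : ℕ) (σ : F)
    (M : Matrix (Fin (s+1) × Fin n) (Fin (s+1) × Fin n) (Polynomial F)) :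
    Matrix ((Fin (s+1) × Fin n) ⊕ (Fin s × Fin n)) ((Fin (s+1) × Fin n) ⊕ (Fin s × Fin n))
      (Polynomial F) :=
  Matrix.fromBlocks M (Lpen F s ⊗ₖ (1 : Matrix (Fin n) (Fin n) (Polynomial F)))ᵀ
    (σ • (Lpen F s ⊗ₖ (1 : Matrix (Fin n) (Fin n) (Polynomial F)))) 0

/-- `L` is a linearization of `P`: there are unimodular `U`, `V` with
`U L V = diag(I_m, P)` (up to the fixed identification of index sets). -/
def IsLinearization {F : Type} [Field F] (m : ℕ) {ι ρ : Type*} [Fintype ι] [DecidableEq ι]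
    [Fintype ρ] [DecidableEq ρ] (L : Matrix ι ι (Polynomial F))
    (P : Matrix ρ ρ (Polynomial F)) : Prop :=
  ∃ (e : (Fin m ⊕ ρ) ≃ ι) (U V : Matrix ι ι (Polynomial F)),
    IsUnit U.det ∧ IsUnit V.det ∧
      U * L * V =
        (Matrix.fromBlocks (1 : Matrix (Fin m) (Fin m) (Polynomial F)) 0 0 P).submatrix
          e.symm e.symm

/-- The block conditions `∑_{i+j=d+2-k} B_{ij} + ∑_{i+j=d+1-k} A_{ij} = P_k` for
`k = 0,…,d` (blocks are indexed here `0`-based, so `i+j` `1`-based is `i+j+2` `0`-based). -/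
def blockConds {F : Type} [Field F] {s n : ℕ} (d : ℕ) (Pc : ℕ → Matrix (Fin n) (Fin n) F)
    (A B : Matrix (Fin (s+1) × Fin n) (Fin (s+1) × Fin n) F) : Prop :=
  ∀ k, k ≤ d →
    (∑ p ∈ Finset.univ.filter
        (fun p : Fin (s+1) × Fin (s+1) => (p.1 : ℕ) + (p.2 : ℕ) + 2 + k = d + 2),
        blk B p.1 p.2) +
      (∑ p ∈ Finset.univ.filter
        (fun p : Fin (s+1) × Fin (s+1) => (p.1 : ℕ) + (p.2 : ℕ) + 2 + k = d + 1),
        blk A p.1 p.2) = Pc k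

/-- `L̂_t(λ) ⊗ I_n` (with `t = u+1`): first block column zero, remaining block columns
`L_{t-1}(λ) ⊗ I_n`; the column index is split as `Fin n ⊕ (Fin t × Fin n)`. -/
def LhatB (F : Type) [Field F] (u n : ℕ) :
    Matrix (Fin u × Fin n) (Fin n ⊕ Fin (u+1) × Fin n) (Polynomial F) :=
  Matrix.of fun p q =>
    match q with
    | Sum.inl _ => 0
    | Sum.inr c => (Lpen F u ⊗ₖ (1 : Matrix (Fin n) (Fin n) (Polynomial F))) p c

/-- The modified block Kronecker pencil `[[λB+A, L̂_t(λ)ᵀ⊗I_n],[σ L̂_t(λ)⊗I_n, 0]]`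
(with `t = u+1`). -/
def modBK (F : Type) [Field F] (u n : ℕ) (σ : F)
    (M : Matrix (Fin n ⊕ Fin (u+1) × Fin n) (Fin n ⊕ Fin (u+1) × Fin n) (Polynomial F)) :
    Matrix ((Fin n ⊕ Fin (u+1) × Fin n) ⊕ Fin u × Fin n)
      ((Fin n ⊕ Fin (u+1) × Fin n) ⊕ Fin u × Fin n) (Polynomial F) :=
  Matrix.fromBlocks M (LhatB F u n)ᵀ (σ • LhatB F u n) 0

/-- `Λ̂_t(λ) ⊗ I_n` (with `t = u+1`): the `(t+1)n × 2n` polynomial matrix whose transpose has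
block rows `(I_n, 0, …, 0)` and `(0, λ^{t-1}I_n, …, λ I_n, I_n)`. -/
def LamHatB (F : Type) [Field F] (u n : ℕ) :
    Matrix (Fin n ⊕ Fin (u+1) × Fin n) (Fin 2 × Fin n) (Polynomial F) :=
  Matrix.of fun q c =>
    match q with
    | Sum.inl r => if c.1 = 0 ∧ c.2 = r then 1 else 0
    | Sum.inr p => if c.1 = 1 ∧ c.2 = p.2 then (X : Polynomial F) ^ (u - (p.1 : ℕ)) else 0

/-- `Λ̃_t(λ) ⊗ I_n` (with `t = u+1`): the `(t+1)n × 2n` polynomial matrix whose transpose has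
block rows `(I_n, 0, …, 0)` and `(0, I_n, λ I_n, …, λ^{t-1} I_n)`. -/
def LamTildeB (F : Type) [Field F] (u n : ℕ) :
    Matrix (Fin n ⊕ Fin (u+1) × Fin n) (Fin 2 × Fin n) (Polynomial F) :=
  Matrix.of fun q c =>
    match q with
    | Sum.inl r => if c.1 = 0 ∧ c.2 = r then 1 else 0
    | Sum.inr p => if c.1 = 1 ∧ c.2 = p.2 then (X : Polynomial F) ^ (p.1 : ℕ) else 0

/-- A `2n × 2n` matrix assembled from four `n × n` blocks, indexed by `Fin 2 × Fin n`. -/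
def twoBlock {α : Type*} {n : ℕ} (W₁₁ W₁₂ W₂₁ W₂₂ : Matrix (Fin n) (Fin n) α) :
    Matrix (Fin 2 × Fin n) (Fin 2 × Fin n) α :=
  Matrix.of fun p q =>
    if p.1 = 0 then (if q.1 = 0 then W₁₁ p.2 q.2 else W₁₂ p.2 q.2)
    else (if q.1 = 0 then W₂₁ p.2 q.2 else W₂₂ p.2 q.2)

/-- `Λ_t(λ) ⊗ I_n` (with `t = u+1`), over the split row index `Fin n ⊕ (Fin t × Fin n)`:
block entries `λ^t I_n, λ^{t-1} I_n, …, λ I_n, I_n`. -/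
def LamFullB (F : Type) [Field F] (u n : ℕ) :
    Matrix (Fin n ⊕ Fin (u+1) × Fin n) (Fin n) (Polynomial F) :=
  Matrix.of fun q c =>
    match q with
    | Sum.inl r => if r = c then (X : Polynomial F) ^ (u + 1) else 0
    | Sum.inr p => if p.2 = c then (X : Polynomial F) ^ (u - (p.1 : ℕ)) else 0

/-- `N̂_t(λ) = Ĥ_t(λ) ⊗ I_n` (with `t = u+1`): `Ĥ_t ∈ F[λ]^{(t-1)×(t+1)}` has `(i,j)` entry
`λ^{i+1-j}` if `2 ≤ j ≤ i+1` and `0` otherwise. -/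
def NhatB (F : Type) [Field F] (u n : ℕ) :
    Matrix (Fin u × Fin n) (Fin n ⊕ Fin (u+1) × Fin n) (Polynomial F) :=
  Matrix.of fun p q =>
    match q with
    | Sum.inl _ => 0
    | Sum.inr c =>
        if (c.1 : ℕ) ≤ (p.1 : ℕ) ∧ p.2 = c.2 then
          (X : Polynomial F) ^ ((p.1 : ℕ) - (c.1 : ℕ)) else 0

end


/-!
Write `Λ = Λ_{t-1}(λ) ⊗ I_n` and `M = λB + A`. A right inverse of `L_{t-1}(λ) ⊗ I_n` completes `Λ`
to a unimodular matrix, and using these completions on the rows and on the columns of the modified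
block Kronecker pencil splits off an identity, leaving
`[[M₁₁, M₁₂ Λ], [Λᵀ M₂₁, Λᵀ M₂₂ Λ]] = [[-P_d, λ^t P_d], [λ^t P_d, Q]]`.
As `P_d` is invertible, the Schur complement `Q + λ^{2t} P_d = P` carries all the information.

The reversal of `L_{t-1}` is `-L_{t-1}` with its rows and columns in reverse order, and likewise
for `Λ`, so the same reduction takes the reversed pencil to
`[[-λ P_d, P_d], [P_d, rev_{d-1} Q]]`. Here the pivot is the off-diagonal `P_d`, with Schur
complement `P_d + λ rev_{d-1} Q = rev_d P`.
-/

section Unimodular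

variable {R : Type*} [CommRing R]
  {p p' q q' : Type*} [Fintype p] [DecidableEq p] [Fintype p'] [DecidableEq p']
  [Fintype q] [DecidableEq q] [Fintype q'] [DecidableEq q']

/-- An invertible matrix whose rows and columns may be indexed by different types; over `F[λ]` and
on a single index type these are the unimodular matrices. -/
def IsUnimodular (U : Matrix p q R) : Prop :=
  ∃ V : Matrix q p R, U * V = 1 ∧ V * U = 1

namespace IsUnimodular

theorem one : IsUnimodular (1 : Matrix p p R) :=
  ⟨1, Matrix.one_mul 1, Matrix.one_mul 1⟩

theorem of_isUnit_det {U : Matrix p p R} (hU : IsUnit U.det) : IsUnimodular U :=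
  ⟨U⁻¹, U.mul_nonsing_inv hU, U.nonsing_inv_mul hU⟩

theorem isUnit_det {U : Matrix p p R} (hU : IsUnimodular U) : IsUnit U.det :=
  let ⟨_, hUV, _⟩ := hU
  Matrix.isUnit_det_of_right_inverse hUV

theorem of_mul_eq_one {U : Matrix p q R} {V : Matrix q p R}
    (hcard : Fintype.card p = Fintype.card q) (h : U * V = 1) : IsUnimodular V :=
  ⟨U, (Matrix.mul_eq_one_comm_of_card_eq _ _ R hcard).mp h, h⟩

theorem card_eq [Nontrivial R] {U : Matrix p q R} (hU : IsUnimodular U) :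
    Fintype.card p = Fintype.card q :=
  let ⟨V, hUV, hVU⟩ := hU
  Matrix.square_of_invertible U V hUV hVU

theorem mul {U : Matrix p q R} {V : Matrix q p' R} (hU : IsUnimodular U) (hV : IsUnimodular V) :
    IsUnimodular (U * V) := by
  obtain ⟨U', hUU', hU'U⟩ := hU
  obtain ⟨V', hVV', hV'V⟩ := hV
  refine ⟨V' * U', ?_, ?_⟩
  · rw [Matrix.mul_assoc, ← Matrix.mul_assoc V, hVV', Matrix.one_mul, hUU']
  · rw [Matrix.mul_assoc, ← Matrix.mul_assoc U', hU'U, Matrix.one_mul, hV'V]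

theorem transpose {U : Matrix p q R} (hU : IsUnimodular U) : IsUnimodular Uᵀ := by
  obtain ⟨V, hUV, hVU⟩ := hU
  refine ⟨Vᵀ, ?_, ?_⟩
  · rw [← transpose_mul, hVU, transpose_one]
  · rw [← transpose_mul, hUV, transpose_one]

theorem submatrix {U : Matrix p q R} (hU : IsUnimodular U) (e : p' ≃ p) (f : q' ≃ q) :
    IsUnimodular (U.submatrix e f) := by
  obtain ⟨V, hUV, hVU⟩ := hU
  exact ⟨V.submatrix f e, by simp [hUV], by simp [hVU]⟩

theorem smul_one {S : Type*} [CommRing S] [Algebra S R] {c : S} (hc : IsUnit c) :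
    IsUnimodular (c • (1 : Matrix p p R)) := by
  obtain ⟨c, rfl⟩ := hc
  exact ⟨(↑c⁻¹ : S) • 1, by simp [smul_smul], by simp [smul_smul]⟩

theorem map {R' : Type*} [CommRing R'] {U : Matrix p q R} (hU : IsUnimodular U) (f : R →+* R') :
    IsUnimodular (U.map f) := by
  obtain ⟨V, hUV, hVU⟩ := hU
  exact ⟨V.map f, by simp [← Matrix.map_mul, hUV], by simp [← Matrix.map_mul, hVU]⟩

theorem fromBlocks_zero₁₂ {A : Matrix p p' R} {D : Matrix q q' R} (hA : IsUnimodular A)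
    (hD : IsUnimodular D) (C : Matrix q p' R) : IsUnimodular (fromBlocks A 0 C D) := by
  obtain ⟨A', hAA', hA'A⟩ := hA
  obtain ⟨D', hDD', hD'D⟩ := hD
  refine ⟨fromBlocks A' 0 (-(D' * C * A')) D', ?_, ?_⟩
  · simp [fromBlocks_multiply, hAA', hDD', ← Matrix.mul_assoc]
  · simp [fromBlocks_multiply, hA'A, hD'D, Matrix.mul_assoc]

theorem fromBlocks_zero₂₁ {A : Matrix p p' R} {D : Matrix q q' R} (hA : IsUnimodular A)
    (hD : IsUnimodular D) (B : Matrix p q' R) : IsUnimodular (fromBlocks A B 0 D) := by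
  simpa [fromBlocks_transpose] using (fromBlocks_zero₁₂ hA.transpose hD.transpose Bᵀ).transpose

theorem fromBlocks_diagonal {A : Matrix p p' R} {D : Matrix q q' R} (hA : IsUnimodular A)
    (hD : IsUnimodular D) : IsUnimodular (fromBlocks A 0 0 D) :=
  fromBlocks_zero₁₂ hA hD 0

end IsUnimodular

end Unimodular

section Equivalence

variable {R : Type*} [CommRing R]
  {m m' n n' p p' q q' : Type*} [Fintype m] [DecidableEq m] [Fintype m'] [DecidableEq m']
  [Fintype n] [DecidableEq n] [Fintype n'] [DecidableEq n']
  [Fintype p] [DecidableEq p] [Fintype p'] [DecidableEq p']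
  [Fintype q] [DecidableEq q] [Fintype q'] [DecidableEq q']

/-- Unimodular equivalence `U S V = T`. The two matrices may be indexed by different types, so that
permutations of rows and columns are instances of it. -/
def UnimodularEquiv (S : Matrix m n R) (T : Matrix p q R) : Prop :=
  ∃ (U : Matrix p m R) (V : Matrix n q R), IsUnimodular U ∧ IsUnimodular V ∧ U * S * V = T

namespace UnimodularEquiv

theorem symm {S : Matrix m n R} {T : Matrix p q R} (h : UnimodularEquiv S T) :
    UnimodularEquiv T S := by
  obtain ⟨U, V, ⟨U', hUU', hU'U⟩, ⟨V', hVV', hV'V⟩, rfl⟩ := h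
  refine ⟨U', V', ⟨U, hU'U, hUU'⟩, ⟨V, hV'V, hVV'⟩, ?_⟩
  calc U' * (U * S * V) * V' = U' * U * S * (V * V') := by simp only [Matrix.mul_assoc]
    _ = S := by rw [hU'U, hVV', Matrix.one_mul, Matrix.mul_one]

theorem trans {S : Matrix m n R} {T : Matrix p q R} {W : Matrix m' n' R}
    (hST : UnimodularEquiv S T) (hTW : UnimodularEquiv T W) : UnimodularEquiv S W := by
  obtain ⟨U, V, hU, hV, rfl⟩ := hST
  obtain ⟨U', V', hU', hV', rfl⟩ := hTW
  exact ⟨U' * U, V * V', hU'.mul hU, hV.mul hV', by simp only [Matrix.mul_assoc]⟩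

theorem submatrix (S : Matrix m n R) (e : p ≃ m) (f : q ≃ n) :
    UnimodularEquiv S (S.submatrix e f) :=
  ⟨(1 : Matrix m m R).submatrix e (Equiv.refl m), (1 : Matrix n n R).submatrix (Equiv.refl n) f,
    IsUnimodular.one.submatrix _ _, IsUnimodular.one.submatrix _ _,
    by rw [one_submatrix_mul, mul_submatrix_one]; simp⟩

theorem fromBlocks_one {S : Matrix m n R} {T : Matrix p q R} (h : UnimodularEquiv S T) :
    UnimodularEquiv (fromBlocks (1 : Matrix m' m' R) 0 0 S)
      (fromBlocks (1 : Matrix m' m' R) 0 0 T) := by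
  obtain ⟨U, V, hU, hV, rfl⟩ := h
  exact ⟨_, _, IsUnimodular.one.fromBlocks_diagonal hU, IsUnimodular.one.fromBlocks_diagonal hV,
    by simp [fromBlocks_multiply]⟩

theorem trans_fromBlocks_one {S : Matrix m n R} {T : Matrix p q R} {W : Matrix p' q' R}
    (hS : UnimodularEquiv S (fromBlocks (1 : Matrix m' m' R) 0 0 T))
    (hT : UnimodularEquiv T (fromBlocks (1 : Matrix n' n' R) 0 0 W)) :
    UnimodularEquiv S (fromBlocks (1 : Matrix (m' ⊕ n') (m' ⊕ n') R) 0 0 W) := by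
  have h := (hS.trans hT.fromBlocks_one).trans
    (submatrix _ (Equiv.sumAssoc m' n' p') (Equiv.sumAssoc m' n' q'))
  convert h using 1
  ext ((i | i) | i) ((j | j) | j) <;> simp [Matrix.one_apply]

/-- The product `A⁻¹ B` of the Schur complement is supplied as a solution `Y` of `A Y = B`. -/
theorem schur_complement {A : Matrix p p' R} (hA : IsUnimodular A) {B : Matrix p q' R}
    {Y : Matrix p' q' R} (hY : A * Y = B) (C : Matrix q p' R) (D : Matrix q q' R) :
    UnimodularEquiv (fromBlocks A B C D)
      (fromBlocks (1 : Matrix p' p' R) 0 0 (D - C * Y)) := by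
  refine symm ⟨fromBlocks A 0 C 1, fromBlocks 1 Y 0 1, hA.fromBlocks_zero₁₂ .one C,
    IsUnimodular.one.fromBlocks_zero₂₁ .one Y, ?_⟩
  simp [fromBlocks_multiply, hY]

theorem of_bordered (Z : Matrix (p ⊕ m) (q ⊕ n) R) :
    UnimodularEquiv
      (fromBlocks Z (fromRows (1 : Matrix p p R) 0) (fromCols (1 : Matrix q q R) 0) 0)
      (fromBlocks (1 : Matrix (q ⊕ p) (q ⊕ p) R) 0 0 Z.toBlocks₂₂) := by
  let rows : (q ⊕ p) ⊕ m ≃ (p ⊕ m) ⊕ q := (Equiv.sumAssoc q p m).trans (Equiv.sumComm _ _)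
  let cols : (q ⊕ p) ⊕ n ≃ (q ⊕ n) ⊕ p := (Equiv.sumAssoc q p n).trans
    (((Equiv.refl q).sumCongr (Equiv.sumComm p n)).trans (Equiv.sumAssoc q n p).symm)
  have hpivot : IsUnimodular (fromBlocks (1 : Matrix q q R) 0 Z.toBlocks₁₁ (1 : Matrix p p R)) :=
    IsUnimodular.one.fromBlocks_zero₁₂ .one _
  have hschur := schur_complement hpivot
    (show _ * fromRows 0 Z.toBlocks₁₂ = fromRows 0 Z.toBlocks₁₂ by simp [fromBlocks_mul_fromRows])
    (fromCols Z.toBlocks₂₁ 0) Z.toBlocks₂₂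
  rw [fromCols_mul_fromRows, Matrix.mul_zero, Matrix.zero_mul, add_zero, sub_zero] at hschur
  refine (submatrix _ rows cols).trans ?_
  convert hschur using 1
  ext ((i | i) | i) ((j | j) | j) <;>
    simp [rows, cols, toBlocks₁₁, toBlocks₁₂, toBlocks₂₁, toBlocks₂₂]

end UnimodularEquiv

theorem UnimodularEquiv.isLinearization {F : Type} [Field F] {k : ℕ} {S : Matrix m m F[X]}
    {P : Matrix q q F[X]} (hS : UnimodularEquiv S (fromBlocks (1 : Matrix p p F[X]) 0 0 P))
    (hk : Fintype.card p = k) : IsLinearization k S P := by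
  let r : Fin k ≃ p := (Fintype.equivFinOfCardEq hk).symm
  let f : Fin k ⊕ q ≃ p ⊕ q := r.sumCongr (Equiv.refl q)
  obtain ⟨U, V, hU, hV, h⟩ := hS.trans (.submatrix _ f f)
  let e : Fin k ⊕ q ≃ m := Fintype.equivOfCardEq hU.card_eq
  refine ⟨e, U.submatrix e.symm (Equiv.refl m), V.submatrix (Equiv.refl m) e.symm,
    (hU.submatrix _ _).isUnit_det, (hV.submatrix _ _).isUnit_det, ?_⟩
  have hf : (fromBlocks (1 : Matrix p p F[X]) 0 0 P).submatrix f f =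
      fromBlocks (1 : Matrix (Fin k) (Fin k) F[X]) 0 0 P := by
    ext (i | i) (j | j) <;> simp [f, Matrix.one_apply]
  calc U.submatrix e.symm (Equiv.refl m) * S * V.submatrix (Equiv.refl m) e.symm
      = (U * S * V).submatrix e.symm e.symm := rfl
    _ = _ := by rw [h, hf]

end Equivalence

section DualBasis

variable {R : Type*} [CommRing R]
  {m m' n c c' q q' : Type*} [Fintype m] [DecidableEq m] [Fintype m'] [DecidableEq m']
  [Fintype n] [DecidableEq n]
  [Fintype c] [DecidableEq c] [Fintype c'] [DecidableEq c'] [Fintype q] [DecidableEq q]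
  [Fintype q'] [DecidableEq q']

/-- The columns of `N` are a basis of the kernel of `K` that extends, by a right inverse `G` of `K`,
to a unimodular matrix `[G N]`. For `R = F[λ]` this is what is used of a pair of dual minimal
bases `K` and `Nᵀ`. -/
def IsDualBasis (K : Matrix c m R) (N : Matrix m q R) : Prop :=
  ∃ G : Matrix m c R, IsUnimodular (fromCols G N) ∧ K * G = 1 ∧ K * N = 0

namespace IsDualBasis

theorem smul {S : Type*} [CommRing S] [Algebra S R] {K : Matrix c m R} {N : Matrix m q R}
    (h : IsDualBasis K N) {s : S} (hs : IsUnit s) : IsDualBasis (s • K) N := by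
  obtain ⟨s, rfl⟩ := hs
  obtain ⟨G, hGN, hKG, hKN⟩ := h
  have hblock : IsUnimodular
      (fromBlocks ((↑s⁻¹ : S) • (1 : Matrix c c R)) 0 0 (1 : Matrix q q R)) :=
    (IsUnimodular.smul_one s⁻¹.isUnit).fromBlocks_diagonal .one
  refine ⟨(↑s⁻¹ : S) • G, ?_, ?_, ?_⟩
  · convert hGN.mul hblock using 1
    simp [fromCols_mul_fromBlocks]
  · simp [hKG, smul_smul]
  · simp [hKN]

theorem submatrix {K : Matrix c m R} {N : Matrix m q R} (h : IsDualBasis K N) (e : c' ≃ c)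
    (f : m' ≃ m) (g : q' ≃ q) : IsDualBasis (K.submatrix e f) (N.submatrix f g) := by
  obtain ⟨G, hGN, hKG, hKN⟩ := h
  refine ⟨G.submatrix f e, ?_, by simp [hKG], by simp [hKN]⟩
  convert hGN.submatrix f (e.sumCongr g) using 1
  ext i (j | j) <;> simp

theorem fromCols_zero {K : Matrix c m R} {N : Matrix m q R} (h : IsDualBasis K N) :
    IsDualBasis (fromCols (0 : Matrix c n R) K) (fromBlocks (1 : Matrix n n R) 0 0 N) := by
  obtain ⟨G, hGN, hKG, hKN⟩ := h
  let cols : c ⊕ (n ⊕ q) ≃ n ⊕ (c ⊕ q) := (Equiv.sumAssoc c n q).symm.trans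
    (((Equiv.sumComm c n).sumCongr (Equiv.refl q)).trans (Equiv.sumAssoc n c q))
  refine ⟨fromRows 0 G, ?_, by simp [fromCols_mul_fromRows, hKG],
    by simp [fromCols_mul_fromBlocks, hKN]⟩
  convert (IsUnimodular.one.fromBlocks_diagonal hGN).submatrix (Equiv.refl (n ⊕ m)) cols using 1
  ext (i | i) (j | j | j) <;> simp [cols]

/-- The block minimal bases pencil theorem: the two unimodular completions turn the
blocks `K₁`, `K₂ᵀ` into `[I 0]`, `[I 0]ᵀ`, which clear everything in the `(1,1)` block
except `N₂ᵀ M N₁`. -/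
theorem unimodularEquiv {K₁ : Matrix c m R} {N₁ : Matrix m q R} {K₂ : Matrix c' m' R}
    {N₂ : Matrix m' q' R} (h₁ : IsDualBasis K₁ N₁) (h₂ : IsDualBasis K₂ N₂) (M : Matrix m' m R) :
    UnimodularEquiv (fromBlocks M K₂ᵀ K₁ 0)
      (fromBlocks (1 : Matrix (c ⊕ c') (c ⊕ c') R) 0 0 (N₂ᵀ * M * N₁)) := by
  obtain ⟨G₁, hGN₁, hKG₁, hKN₁⟩ := h₁
  obtain ⟨G₂, hGN₂, hKG₂, hKN₂⟩ := h₂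
  have hGK₂ : G₂ᵀ * K₂ᵀ = 1 := by rw [← transpose_mul, hKG₂, transpose_one]
  have hNK₂ : N₂ᵀ * K₂ᵀ = 0 := by rw [← transpose_mul, hKN₂, transpose_zero]
  have hcongr : UnimodularEquiv (fromBlocks M K₂ᵀ K₁ 0)
      (fromBlocks ((fromCols G₂ N₂)ᵀ * M * fromCols G₁ N₁) (fromRows (1 : Matrix c' c' R) 0)
        (fromCols (1 : Matrix c c R) 0) 0) := by
    refine ⟨fromBlocks (fromCols G₂ N₂)ᵀ 0 0 1, fromBlocks (fromCols G₁ N₁) 0 0 1,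
      hGN₂.transpose.fromBlocks_diagonal .one, hGN₁.fromBlocks_diagonal .one, ?_⟩
    simp [fromBlocks_multiply, transpose_fromCols, fromRows_mul, mul_fromCols, hGK₂, hNK₂, hKG₁,
      hKN₁]
  convert hcongr.trans (.of_bordered _) using 2
  simp [transpose_fromCols, fromRows_mul, mul_fromCols]

theorem unimodularEquiv_fromCols_zero {S : Type*} [CommRing S] [Algebra S R] {s : S}
    (hs : IsUnit s) {K : Matrix c m R} {N : Matrix m q R} (h : IsDualBasis K N)
    (M : Matrix (n ⊕ m) (n ⊕ m) R) :
    UnimodularEquiv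
      (fromBlocks M (fromCols (0 : Matrix c n R) K)ᵀ (s • fromCols (0 : Matrix c n R) K) 0)
      (fromBlocks (1 : Matrix (c ⊕ c) (c ⊕ c) R) 0 0
        (fromBlocks M.toBlocks₁₁ (M.toBlocks₁₂ * N) (Nᵀ * M.toBlocks₂₁)
          (Nᵀ * M.toBlocks₂₂ * N))) := by
  have hK : IsDualBasis (fromCols (0 : Matrix c n R) K) (fromBlocks (1 : Matrix n n R) 0 0 N) :=
    h.fromCols_zero
  convert (hK.smul hs).unimodularEquiv hK M using 2
  conv_rhs => rw [← fromBlocks_toBlocks M]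
  simp [fromBlocks_multiply, fromBlocks_transpose]

end IsDualBasis

end DualBasis

section TwoByTwo

variable {R : Type*} [CommRing R] {m : Type*} [Fintype m] [DecidableEq m]

theorem UnimodularEquiv.fromBlocks_neg_smul {D : Matrix m m R} (hD : IsUnimodular D) (x : R)
    (Q : Matrix m m R) :
    UnimodularEquiv (fromBlocks (-D) (x • D) (x • D) Q)
      (fromBlocks (1 : Matrix m m R) 0 0 (Q + (x * x) • D)) := by
  have hneg : IsUnimodular (-D) := by
    simpa using hD.mul (IsUnimodular.smul_one (p := m) (isUnit_one (M := R)).neg)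
  have hY : -D * -(x • 1) = x • D := by simp
  simpa [smul_smul] using schur_complement hneg hY (x • D) Q

/-- The invertible block is off the diagonal here, hence the exchange of the block columns. -/
theorem UnimodularEquiv.fromBlocks_neg_smul_reversed {D : Matrix m m R} (hD : IsUnimodular D)
    (x : R) (Q : Matrix m m R) :
    UnimodularEquiv (fromBlocks (-(x • D)) D D Q)
      (fromBlocks (1 : Matrix m m R) 0 0 (x • Q + D)) := by
  have hswap := submatrix (fromBlocks (-(x • D)) D D Q) (Equiv.refl (m ⊕ m)) (Equiv.sumComm m m)
  have hY : D * -(x • 1) = -(x • D) := by simp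
  refine hswap.trans ?_
  convert schur_complement hD hY Q D using 1
  · exact fromBlocks_submatrix_sum_swap_right _ _ _ _ _
  · simp [add_comm]

end TwoByTwo

section Reversal

variable {α β γ : Type*}

section Semiring

variable {R : Type*} [Semiring R]

theorem reflect_finset_sum {ι : Type*} (g : ℕ) (s : Finset ι) (f : ι → R[X]) :
    (∑ i ∈ s, f i).reflect g = ∑ i ∈ s, (f i).reflect g :=
  map_sum (⟨⟨reflect g, reflect_zero⟩, fun p q => reflect_add p q g⟩ : R[X] →+ R[X]) f s

/-- A matrix polynomial of grade `g`, the class on which the reversal `rev_g` is multiplicative in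
the sense of `revMat_mul`. -/
def HasGrade (g : ℕ) (M : Matrix α β R[X]) : Prop :=
  ∀ i j, (M i j).natDegree ≤ g

theorem HasGrade.mul [Fintype β] {g h : ℕ} {S : Matrix α β R[X]} {T : Matrix β γ R[X]}
    (hS : HasGrade g S) (hT : HasGrade h T) : HasGrade (g + h) (S * T) := fun i j =>
  natDegree_sum_le_of_forall_le _ _ fun k _ => natDegree_mul_le_of_le (hS i k) (hT k j)

theorem HasGrade.transpose {g : ℕ} {M : Matrix α β R[X]} (hM : HasGrade g M) : HasGrade g Mᵀ :=
  fun i j => hM j i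

theorem HasGrade.submatrix {g : ℕ} {M : Matrix α β R[X]} (hM : HasGrade g M) {α' β' : Type*}
    (e : α' → α) (f : β' → β) : HasGrade g (M.submatrix e f) :=
  fun i j => hM (e i) (f j)

end Semiring

variable {F : Type} [Field F]

theorem hasGrade_pencil (A B : Matrix α β F) : HasGrade 1 (pencil A B) := fun i j => by
  rw [pencil, Matrix.add_apply, Matrix.smul_apply, smul_eq_mul, mul_comm, add_comm]
  exact natDegree_linear_le

theorem hasGrade_Lam (s n : ℕ) : HasGrade s (Lam F s n) := fun i j => by
  rw [Lam, of_apply]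
  split_ifs
  · exact (natDegree_X_pow_le _).trans (Nat.sub_le _ _)
  · simp

theorem revMat_add (g : ℕ) (S T : Matrix α β F[X]) :
    revMat g (S + T) = revMat g S + revMat g T :=
  Matrix.ext fun _ _ => reflect_add _ _ _

theorem revMat_neg (g : ℕ) (M : Matrix α β F[X]) : revMat g (-M) = -revMat g M :=
  Matrix.ext fun _ _ => reflect_neg _ _

theorem revMat_mul [Fintype β] {g h k : ℕ} (hk : g + h = k) {S : Matrix α β F[X]}
    {T : Matrix β γ F[X]} (hS : HasGrade g S) (hT : HasGrade h T) :
    revMat k (S * T) = revMat g S * revMat h T := by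
  subst hk
  ext1 i j
  simp only [revMat, map_apply, mul_apply, reflect_finset_sum]
  exact Finset.sum_congr rfl fun k _ => reflect_mul _ _ (hS i k) (hT k j)

theorem revMat_succ {g : ℕ} {M : Matrix α β F[X]} (hM : HasGrade g M) :
    revMat (g + 1) M = (X : F[X]) • revMat g M := by
  ext1 i j
  have h := reflect_mul (M i j) 1 (hM i j) (G := 1) (by simp)
  rwa [mul_one, reflect_one, pow_one, mul_comm] at h

theorem revMat_X_pow_smul_matC {g k : ℕ} (hk : k ≤ g) (D : Matrix α β F) :
    revMat g ((X : F[X]) ^ k • matC D) = (X : F[X]) ^ (g - k) • matC D := by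
  ext1 i j
  simp only [revMat, matC, map_apply, Matrix.smul_apply, smul_eq_mul]
  rw [mul_comm, reflect_C_mul_X_pow, revAt_le hk, mul_comm]

theorem revMat_add_X_pow_smul_matC {g : ℕ} {Q : Matrix α β F[X]} (hQ : HasGrade g Q)
    (D : Matrix α β F) :
    revMat (g + 1) (Q + (X : F[X]) ^ (g + 1) • matC D) = (X : F[X]) • revMat g Q + matC D := by
  rw [revMat_add, revMat_succ hQ, revMat_X_pow_smul_matC le_rfl, Nat.sub_self, pow_zero, one_smul]

end Reversal

section BlockKronecker

variable {F : Type} [Field F]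

/-- The pencil `L_s(λ) ⊗ I_n`. -/
noncomputable abbrev LpenB (F : Type) [Field F] (s n : ℕ) :
    Matrix (Fin s × Fin n) (Fin (s + 1) × Fin n) F[X] :=
  Lpen F s ⊗ₖ (1 : Matrix (Fin n) (Fin n) F[X])

theorem LpenB_mul_apply {s n : ℕ} {κ : Type*}
    (N : Matrix (Fin (s + 1) × Fin n) κ F[X]) (i : Fin s) (r : Fin n) (k : κ) :
    (LpenB F s n * N) (i, r) k =
      -N (i.castSucc, r) k + X * N (i.succ, r) k := by
  have hLpen : ∀ j, Lpen F s i j =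
      (if j = i.castSucc then -1 else 0) + (if j = i.succ then X else 0) := by
    intro j
    simp only [Lpen, of_apply, Fin.ext_iff, Fin.val_castSucc, Fin.val_succ]
    split_ifs <;> first | omega | simp
  simp [mul_apply, Fintype.sum_prod_type, kroneckerMap_apply, one_apply, hLpen, add_mul,
    Finset.sum_add_distrib]

/-- A right inverse of `L_s(λ)`, completing the column `Λ_s(λ)` to a unimodular matrix. -/
noncomputable def LpenRightInv (F : Type) [Field F] (s : ℕ) : Matrix (Fin (s + 1)) (Fin s) F[X] :=
  Matrix.of fun i j => if (i : ℕ) ≤ j then -X ^ ((j : ℕ) - i) else 0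

theorem LpenRightInv_recurrence {s : ℕ} (i j : Fin s) :
    -LpenRightInv F s i.castSucc j + X * LpenRightInv F s i.succ j =
      (1 : Matrix (Fin s) (Fin s) F[X]) i j := by
  simp only [LpenRightInv, of_apply, one_apply, Fin.val_castSucc, Fin.val_succ, Fin.ext_iff]
  rcases lt_trichotomy (i : ℕ) j with h | h | h
  · obtain ⟨k, hk⟩ := Nat.exists_eq_add_of_lt h
    rw [if_pos h.le, if_pos (by omega), if_neg h.ne, show (j : ℕ) - i = k + 1 by omega,
      show (j : ℕ) - (i + 1) = k by omega]
    ring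
  · simp [h]
  · rw [if_neg (by omega), if_neg (by omega), if_neg h.ne']
    simp

theorem isDualBasis_LpenB (s n : ℕ) : IsDualBasis (LpenB F s n) (Lam F s n) := by
  let G := LpenRightInv F s ⊗ₖ (1 : Matrix (Fin n) (Fin n) F[X])
  let H : Matrix (Fin n) (Fin (s + 1) × Fin n) F[X] :=
    (1 : Matrix _ _ F[X]).submatrix (fun r => (Fin.last s, r)) (Equiv.refl _)
  have hKG : LpenB F s n * G = 1 := by
    ext1 ⟨i, r⟩ ⟨j, c⟩
    rw [LpenB_mul_apply, ← one_kronecker_one]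
    simp only [G, kroneckerMap_apply, ← LpenRightInv_recurrence]
    ring
  have hKN : LpenB F s n * Lam F s n = 0 := by
    ext1 ⟨i, r⟩ c
    rw [LpenB_mul_apply]
    simp only [Lam, of_apply, Fin.val_castSucc, Fin.val_succ, Matrix.zero_apply]
    rw [show s - (i : ℕ) = s - (i + 1) + 1 by omega]
    split_ifs <;> ring
  have hHG : H * G = 0 := by
    ext1 r ⟨j, c⟩
    rw [one_submatrix_mul]
    simp [G, LpenRightInv, kroneckerMap_apply, j.isLt]
  have hHN : H * Lam F s n = 1 := by
    ext1 r c
    rw [one_submatrix_mul]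
    simp [Lam, one_apply]
  refine ⟨G, .of_mul_eq_one (U := fromRows (LpenB F s n) H) ?_ ?_, hKG, hKN⟩
  · simp only [Fintype.card_sum, Fintype.card_prod, Fintype.card_fin]
    ring
  · rw [fromRows_mul_fromCols, hKG, hKN, hHG, hHN, fromBlocks_one]

theorem revMat_LpenB (s n : ℕ) :
    revMat 1 (LpenB F s n) =
      (-1 : F[X]) • (LpenB F s n).submatrix (Fin.revPerm.prodCongr (Equiv.refl _))
        (Fin.revPerm.prodCongr (Equiv.refl _)) := by
  have hLpen : ∀ i j, (Lpen F s i j).reflect 1 = -Lpen F s i.rev j.rev := by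
    intro i j
    simp only [Lpen, of_apply, Fin.val_rev]
    split_ifs <;> first | omega | simp
  ext1 ⟨i, r⟩ ⟨j, c⟩
  by_cases hrc : r = c <;> simp [revMat, kroneckerMap_apply, hrc, hLpen]

theorem revMat_Lam (s n : ℕ) :
    revMat s (Lam F s n) =
      (Lam F s n).submatrix (Fin.revPerm.prodCongr (Equiv.refl _)) (Equiv.refl _) := by
  ext1 ⟨i, r⟩ c
  simp only [revMat, Lam, map_apply, submatrix_apply, of_apply, Equiv.prodCongr_apply,
    Prod.map_fst, Prod.map_snd, Fin.revPerm_apply, Fin.val_rev, Equiv.coe_refl, id_eq]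
  split_ifs
  · rw [reflect_monomial, revAt_le (by omega)]
    congr 1
    omega
  · exact reflect_zero

theorem isDualBasis_revMat_LpenB (s n : ℕ) :
    IsDualBasis (revMat 1 (LpenB F s n)) (revMat s (Lam F s n)) := by
  rw [revMat_LpenB, revMat_Lam]
  exact ((isDualBasis_LpenB s n).submatrix _ _ _).smul isUnit_one.neg

theorem modBK_eq_fromBlocks {u n : ℕ} (σ : F)
    (M : Matrix (Fin n ⊕ Fin (u + 1) × Fin n) (Fin n ⊕ Fin (u + 1) × Fin n) F[X]) :
    modBK F u n σ M =
      fromBlocks M (fromCols 0 (LpenB F u n))ᵀ (σ • fromCols 0 (LpenB F u n)) 0 := by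
  have hLhat : LhatB F u n = fromCols 0 (LpenB F u n) := by
    ext1 i (j | j) <;> rfl
  rw [modBK, hLhat]

theorem revMat_modBK {u n : ℕ} (σ : F)
    (M : Matrix (Fin n ⊕ Fin (u + 1) × Fin n) (Fin n ⊕ Fin (u + 1) × Fin n) F[X]) :
    revMat 1 (modBK F u n σ M) =
      fromBlocks (revMat 1 M) (fromCols 0 (revMat 1 (LpenB F u n)))ᵀ
        (σ • fromCols 0 (revMat 1 (LpenB F u n))) 0 := by
  rw [modBK_eq_fromBlocks]
  ext1 ((i | i) | i) ((j | j) | j) <;> simp [revMat, smul_eq_C_mul, reflect_C_mul]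

theorem card_modBK_identity_block (u n : ℕ) :
    Fintype.card ((Fin u × Fin n ⊕ Fin u × Fin n) ⊕ Fin n) = (2 * (u + 1) - 1) * n := by
  rw [show 2 * (u + 1) - 1 = u + u + 1 by omega]
  simp only [Fintype.card_sum, Fintype.card_prod, Fintype.card_fin]
  ring

theorem isUnimodular_matC {m : Type*} [Fintype m] [DecidableEq m] {D : Matrix m m F}
    (hD : IsUnit D.det) : IsUnimodular (matC D) :=
  (IsUnimodular.of_isUnit_det hD).map C

variable {u n : ℕ} {σ : F} {D : Matrix (Fin n) (Fin n) F} {Q : Matrix (Fin n) (Fin n) F[X]}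
  {M : Matrix (Fin n ⊕ Fin (u + 1) × Fin n) (Fin n ⊕ Fin (u + 1) × Fin n) F[X]}

theorem unimodularEquiv_revMat_modBK (hσ : σ ≠ 0) (hM : HasGrade 1 M) :
    UnimodularEquiv (revMat 1 (modBK F u n σ M))
      (fromBlocks
        (1 : Matrix (Fin u × Fin n ⊕ Fin u × Fin n) (Fin u × Fin n ⊕ Fin u × Fin n) F[X]) 0 0
        (fromBlocks (revMat 1 M.toBlocks₁₁) (revMat (u + 1) (M.toBlocks₁₂ * Lam F u n))
          (revMat (u + 1) ((Lam F u n)ᵀ * M.toBlocks₂₁))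
          (revMat (u + 1 + u) ((Lam F u n)ᵀ * M.toBlocks₂₂ * Lam F u n)))) := by
  have hΛ : HasGrade u (Lam F u n) := hasGrade_Lam u n
  have hM₁₂ : HasGrade 1 M.toBlocks₁₂ := hM.submatrix Sum.inl Sum.inr
  have hM₂₁ : HasGrade 1 M.toBlocks₂₁ := hM.submatrix Sum.inr Sum.inl
  have hM₂₂ : HasGrade 1 M.toBlocks₂₂ := hM.submatrix Sum.inr Sum.inr
  rw [revMat_mul (add_comm 1 u) hM₁₂ hΛ, revMat_mul rfl hΛ.transpose hM₂₁,
    revMat_mul rfl (hΛ.transpose.mul hM₂₂) hΛ, revMat_mul rfl hΛ.transpose hM₂₂, revMat_modBK]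
  exact (isDualBasis_revMat_LpenB u n).unimodularEquiv_fromCols_zero hσ.isUnit (revMat 1 M)

theorem isLinearization_modBK (hσ : σ ≠ 0) (hD : IsUnit D.det)
    (h₁₁ : M.toBlocks₁₁ = -matC D)
    (h₁₂ : M.toBlocks₁₂ * Lam F u n = (X : F[X]) ^ (u + 1) • matC D)
    (h₂₁ : (Lam F u n)ᵀ * M.toBlocks₂₁ = (X : F[X]) ^ (u + 1) • matC D)
    (h₂₂ : (Lam F u n)ᵀ * M.toBlocks₂₂ * Lam F u n = Q) :
    IsLinearization ((2 * (u + 1) - 1) * n) (modBK F u n σ M)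
      (Q + (X : F[X]) ^ (2 * (u + 1)) • matC D) := by
  have hred := (isDualBasis_LpenB u n).unimodularEquiv_fromCols_zero hσ.isUnit M
  rw [h₁₁, h₁₂, h₂₁, h₂₂, ← modBK_eq_fromBlocks] at hred
  have hschur := UnimodularEquiv.fromBlocks_neg_smul (isUnimodular_matC hD)
    ((X : F[X]) ^ (u + 1)) Q
  rw [← pow_add, ← two_mul] at hschur
  exact (hred.trans_fromBlocks_one hschur).isLinearization (card_modBK_identity_block u n)

theorem isLinearization_revMat_modBK (hσ : σ ≠ 0) (hD : IsUnit D.det) (hM : HasGrade 1 M)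
    (h₁₁ : M.toBlocks₁₁ = -matC D)
    (h₁₂ : M.toBlocks₁₂ * Lam F u n = (X : F[X]) ^ (u + 1) • matC D)
    (h₂₁ : (Lam F u n)ᵀ * M.toBlocks₂₁ = (X : F[X]) ^ (u + 1) • matC D)
    (h₂₂ : (Lam F u n)ᵀ * M.toBlocks₂₂ * Lam F u n = Q) :
    IsLinearization ((2 * (u + 1) - 1) * n) (revMat 1 (modBK F u n σ M))
      (revMat (2 * (u + 1)) (Q + (X : F[X]) ^ (2 * (u + 1)) • matC D)) := by
  have hΛ : HasGrade u (Lam F u n) := hasGrade_Lam u n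
  have hQ : HasGrade (u + 1 + u) Q :=
    h₂₂ ▸ (hΛ.transpose.mul (hM.submatrix Sum.inr Sum.inr)).mul hΛ
  have hred := unimodularEquiv_revMat_modBK hσ hM
  have hrev₁₁ : revMat 1 (-matC D) = -((X : F[X]) • matC D) := by
    simpa [revMat_neg] using revMat_X_pow_smul_matC (Nat.zero_le 1) D
  have hrev : revMat (u + 1) ((X : F[X]) ^ (u + 1) • matC D) = matC D := by
    simpa using revMat_X_pow_smul_matC (le_refl (u + 1)) D
  rw [h₁₁, h₁₂, h₂₁, h₂₂, hrev₁₁, hrev] at hred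
  have hschur := UnimodularEquiv.fromBlocks_neg_smul_reversed (isUnimodular_matC hD) (X : F[X])
    (revMat (u + 1 + u) Q)
  rw [← revMat_add_X_pow_smul_matC hQ, show u + 1 + u + 1 = 2 * (u + 1) by ring] at hschur
  exact (hred.trans_fromBlocks_one hschur).isLinearization (card_modBK_identity_block u n)

theorem stmt_11_general (hσ : σ ≠ 0) (Pc : ℕ → Matrix (Fin n) (Fin n) F)
    (hPd : IsUnit (Pc (2 * (u + 1))).det) (hM : HasGrade 1 M)
    (h₁₁ : M.toBlocks₁₁ = -matC (Pc (2 * (u + 1))))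
    (h₁₂ : M.toBlocks₁₂ * Lam F u n = (X : F[X]) ^ (u + 1) • matC (Pc (2 * (u + 1))))
    (h₂₁ : (Lam F u n)ᵀ * M.toBlocks₂₁ = (X : F[X]) ^ (u + 1) • matC (Pc (2 * (u + 1))))
    (h₂₂ : (Lam F u n)ᵀ * M.toBlocks₂₂ * Lam F u n =
      ∑ k ∈ Finset.range (2 * (u + 1)), (X : F[X]) ^ k • matC (Pc k)) :
    IsLinearization ((2 * (u + 1) - 1) * n) (modBK F u n σ M)
        (polyOfCoeffs (2 * (u + 1)) Pc) ∧
      IsLinearization ((2 * (u + 1) - 1) * n) (revMat 1 (modBK F u n σ M))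
        (revMat (2 * (u + 1)) (polyOfCoeffs (2 * (u + 1)) Pc)) := by
  rw [polyOfCoeffs, Finset.sum_range_succ]
  exact ⟨isLinearization_modBK hσ hPd h₁₁ h₁₂ h₂₁ h₂₂,
    isLinearization_revMat_modBK hσ hPd hM h₁₁ h₁₂ h₂₁ h₂₂⟩

end BlockKronecker

/-- (`t = u+1 ≥ 2`, `d = 2t`.) If the blocks of the pencil `λB+A` satisfy
`M₁₁ = -P_d`, `M₁₂(λ)(Λ_{t-1}(λ)⊗I_n) = λ^t P_d`, `(Λ_{t-1}(λ)ᵀ⊗I_n)M₂₁(λ) = λ^t P_d`, and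
`(Λ_{t-1}(λ)ᵀ⊗I_n)M₂₂(λ)(Λ_{t-1}(λ)⊗I_n) = Q(λ)`, with `P_d` invertible, then for each
`σ ∈ {1,-1}` the modified block Kronecker pencil is a strong linearization of `P` of
grade `d`. -/
theorem stmt_11 {F : Type} [Field F] (n u : ℕ) (hn : 0 < n) (hu : 1 ≤ u)
    (Pc : ℕ → Matrix (Fin n) (Fin n) F)
    (hPd : IsUnit (Pc (2*(u+1))).det)
    (σ : F) (hσ : σ = 1 ∨ σ = -1)
    (A B : Matrix (Fin n ⊕ Fin (u+1) × Fin n) (Fin n ⊕ Fin (u+1) × Fin n) F)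
    (h11 : (pencil A B).toBlocks₁₁ = -(matC (Pc (2*(u+1)))))
    (h12 : (pencil A B).toBlocks₁₂ * Lam F u n =
      (X : Polynomial F) ^ (u+1) • matC (Pc (2*(u+1))))
    (h21 : (Lam F u n)ᵀ * (pencil A B).toBlocks₂₁ =
      (X : Polynomial F) ^ (u+1) • matC (Pc (2*(u+1))))
    (h22 : (Lam F u n)ᵀ * (pencil A B).toBlocks₂₂ * Lam F u n =
      ∑ k ∈ Finset.range (2*(u+1)), (X : Polynomial F) ^ k • matC (Pc k)) :
    IsLinearization ((2*(u+1) - 1)*n) (modBK F u n σ (pencil A B))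
        (polyOfCoeffs (2*(u+1)) Pc) ∧
      IsLinearization ((2*(u+1) - 1)*n) (revMat 1 (modBK F u n σ (pencil A B)))
        (revMat (2*(u+1)) (polyOfCoeffs (2*(u+1)) Pc)) := by
  have hσ₀ : σ ≠ 0 := by rcases hσ with rfl | rfl <;> simp
  exact stmt_11_general hσ₀ Pc hPd (hasGrade_pencil A B) h11 h12 h21 h22
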